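/- (Theorem 1, missing-data and outcome models correct.) Fix d in {(1,1),(0,1),(1,0)} and d' = (0,0). Suppose Assumption DID holds for d and for d', Assumption MAR holds, P(D = d | X) > 0 and P(D = d' | X) > 0 a.s., all four Hájek-weight denominators are finite and strictly positive, and all expectations defining τ^R_{dd'} are finite. If, a.s., φ_{d2}(X) = q_{d2}(X) and φ_0(X) = q_0(X), and μ_d(X) = m_d(X) and μ_{d'}(X) = m_{d'}(X), while π_{d1|d2}, π_{0|0}, π_{d2}, π_0 are arbitrary (0,1)-valued measurable functions of X, then τ^R_{dd'} = τ_{dd'}. -/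

import Mathlib

open MeasureTheory Set
open scoped Classical

noncomputable section

namespace DIDMissing

variable {Ω : Type*} {𝓧 : Type*}

/-- Real-valued indicator of a set. -/
def ind (A : Set Ω) : Ω → ℝ := A.indicator fun _ => (1 : ℝ)

/-- All treatment paths `{0,1}²` (coded as reals). -/
def allPaths : Set (ℝ × ℝ) := {(0, 0), (0, 1), (1, 0), (1, 1)}

/-- The three treated paths `{(1,1), (0,1), (1,0)}`. -/
def threePaths : Set (ℝ × ℝ) := {(1, 1), (0, 1), (1, 0)}

/-- The event `{D = d}` for a treatment path `d = (d₁, d₂)`. -/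
def evD (D1 D2 : Ω → ℝ) (d : ℝ × ℝ) : Set Ω := {ω | D1 ω = d.1 ∧ D2 ω = d.2}

/-- The event `{D₂ = b}`. -/
def evD2 (D2 : Ω → ℝ) (b : ℝ) : Set Ω := {ω | D2 ω = b}

/-- `g` is a (measurable-in-the-covariate) version of the conditional mean `E[Z ∣ A, X]`:
for every bounded measurable `h`, `E[1_A · Z · h(X)] = E[1_A · g(X) · h(X)]`. -/
def IsCondMeanGiven [MeasurableSpace Ω] [MeasurableSpace 𝓧] (P : Measure Ω) (X : Ω → 𝓧)
    (A : Set Ω) (Z : Ω → ℝ) (g : 𝓧 → ℝ) : Prop :=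
  Measurable g ∧
    ∀ h : 𝓧 → ℝ, Measurable h → (∃ C, ∀ x, |h x| ≤ C) →
      ∫ ω, ind A ω * Z ω * h (X ω) ∂P = ∫ ω, ind A ω * g (X ω) * h (X ω) ∂P

/-- Assumption DID for a path `d` relative to `d' = (0,0)`:
(i) no anticipation, `E[Y₀(d) ∣ D = d, X] = E[Y₀(0,0) ∣ D = d, X]` a.s., stated in the
version-free integral form; and (ii) conditional parallel trends, stated as the existence
of a common version of `E[Y₂(0,0) − Y₀(0,0) ∣ X]` and `E[Y₂(0,0) − Y₀(0,0) ∣ D = d, X]`. -/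
def DID [MeasurableSpace Ω] [MeasurableSpace 𝓧] (P : Measure Ω) (X : Ω → 𝓧)
    (D1 D2 : Ω → ℝ) (Y0p Y2p : ℝ × ℝ → Ω → ℝ) (d : ℝ × ℝ) : Prop :=
  (∀ h : 𝓧 → ℝ, Measurable h → (∃ C, ∀ x, |h x| ≤ C) →
      ∫ ω, ind (evD D1 D2 d) ω * Y0p d ω * h (X ω) ∂P
        = ∫ ω, ind (evD D1 D2 d) ω * Y0p (0, 0) ω * h (X ω) ∂P) ∧
  (∃ tr : 𝓧 → ℝ,
      IsCondMeanGiven P X Set.univ (fun ω => Y2p (0, 0) ω - Y0p (0, 0) ω) tr ∧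
      IsCondMeanGiven P X (evD D1 D2 d) (fun ω => Y2p (0, 0) ω - Y0p (0, 0) ω) tr)

/-- Assumption MAR: `S ⟂ (D₁, ΔY) ∣ (D₂, X)`, where `q d₂` is a version of the
missing-data probability `P(S = 1 ∣ D₂ = d₂, X)`, which is `(0,1]`-valued a.s. -/
def MAR [MeasurableSpace Ω] [MeasurableSpace 𝓧] (P : Measure Ω) (X : Ω → 𝓧)
    (D1 D2 S Y0 Y2 : Ω → ℝ) (q : ℝ → 𝓧 → ℝ) : Prop :=
  (∀ d2 ∈ ({0, 1} : Set ℝ), IsCondMeanGiven P X (evD2 D2 d2) S (q d2)) ∧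
  (∀ d2 ∈ ({0, 1} : Set ℝ), ∀ᵐ ω ∂P, 0 < q d2 (X ω) ∧ q d2 (X ω) ≤ 1) ∧
  (∀ d2 ∈ ({0, 1} : Set ℝ), ∀ f : ℝ × ℝ → ℝ, Measurable f → (∃ C, ∀ p, |f p| ≤ C) →
      ∀ h : 𝓧 → ℝ, Measurable h → (∃ C, ∀ x, |h x| ≤ C) →
        ∫ ω, ind (evD2 D2 d2) ω * S ω * f (D1 ω, Y2 ω - Y0 ω) * h (X ω) ∂P
          = ∫ ω, ind (evD2 D2 d2) ω * q d2 (X ω) * f (D1 ω, Y2 ω - Y0 ω) * h (X ω) ∂P)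

/-- The path-dependent ATT `τ_{d,(0,0)} = E[Y₂(d) − Y₂(0,0) ∣ D = d]`. -/
def tau [MeasurableSpace Ω] (P : Measure Ω) (D1 D2 : Ω → ℝ)
    (Y2p : ℝ × ℝ → Ω → ℝ) (d : ℝ × ℝ) : ℝ :=
  (P (evD D1 D2 d)).toReal⁻¹ * ∫ ω in evD D1 D2 d, (Y2p d ω - Y2p (0, 0) ω) ∂P

/-- Numerator of the Hájek weight `w₁`. -/
def n1 (X : Ω → 𝓧) (D1 D2 S : Ω → ℝ) (φ2 : 𝓧 → ℝ) (d : ℝ × ℝ) : Ω → ℝ :=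
  fun ω => S ω / φ2 (X ω) * ind (evD D1 D2 d) ω

/-- Numerator of the Hájek weight `w₂`. -/
def n2 (X : Ω → 𝓧) (D1 D2 S : Ω → ℝ) (φ0 πc πc' π2 π0 : 𝓧 → ℝ) : Ω → ℝ :=
  fun ω => S ω / φ0 (X ω) * (πc (X ω) * π2 (X ω) / (πc' (X ω) * π0 (X ω)))
    * ind (evD D1 D2 (0, 0)) ω

/-- Numerator of the Hájek weight `w₃`. -/
def n3 (X : Ω → 𝓧) (D2 : Ω → ℝ) (πc : 𝓧 → ℝ) (d2 : ℝ) : Ω → ℝ :=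
  fun ω => πc (X ω) * ind (evD2 D2 d2) ω

/-- Numerator of the Hájek weight `w₄`. -/
def n4 (X : Ω → 𝓧) (D2 S : Ω → ℝ) (φ2 πc : 𝓧 → ℝ) (d2 : ℝ) : Ω → ℝ :=
  fun ω => S ω / φ2 (X ω) * πc (X ω) * ind (evD2 D2 d2) ω

/-- The robust estimand `τ^R_{d,(0,0)}`. -/
def tauR [MeasurableSpace Ω] (P : Measure Ω) (X : Ω → 𝓧) (D1 D2 S Y0 Y2 : Ω → ℝ)
    (d : ℝ × ℝ) (μd μd' πc πc' π2 π0 φ2 φ0 : 𝓧 → ℝ) : ℝ :=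
  (∫ ω, (n1 X D1 D2 S φ2 d ω / ∫ ω', n1 X D1 D2 S φ2 d ω' ∂P
        - n2 X D1 D2 S φ0 πc πc' π2 π0 ω / ∫ ω', n2 X D1 D2 S φ0 πc πc' π2 π0 ω' ∂P)
      * (Y2 ω - Y0 ω - μd' (X ω)) ∂P)
  + ∫ ω, (n3 X D2 πc d.2 ω / ∫ ω', n3 X D2 πc d.2 ω' ∂P
        - n4 X D2 S φ2 πc d.2 ω / ∫ ω', n4 X D2 S φ2 πc d.2 ω' ∂P)
      * (μd (X ω) - μd' (X ω)) ∂P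

/-!
All the conditional-moment assumptions say that some variable `W` is orthogonal to every bounded
function of `X`. By truncation such a `W` is orthogonal to every measurable function of `X`, so
these relations may be multiplied by weights built from arbitrary propensity models, with no
integrability to check. Missingness at random makes `S - φ(X)` orthogonal in this sense on each
treatment event, so inverse weighting by `φ` undoes the missingness. Hence `w₂` annihilates the
residual `ΔY - μ_{d'}(X)`, because `μ_{d'}` is correct; `w₃` and `w₄` have the same mean given `X`,
so that the outcome term vanishes; and `w₁` leaves `E[ΔY - μ_{d'}(X) ∣ D = d]`. Since
`P(D = d' ∣ X) > 0`, the parallel trends assumptions for `d` and `d'` concern the same function of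
`X`, namely `μ_{d'}`, so that this last mean is `τ_{dd'}`.
-/

section CondMeanZero

variable {E F : Type*} [MeasurableSpace Ω] [MeasurableSpace E] [MeasurableSpace F]
  {P : Measure Ω} {T : Ω → E} {U : Ω → F} {V W : Ω → ℝ}

/-- `E[W ∣ T] = 0`, in the version-free form used by `IsCondMeanGiven`: `W` is orthogonal to every
bounded measurable function of `T`. Integrability of `W` is not part of the definition. -/
def CondMeanZero (P : Measure Ω) (T : Ω → E) (W : Ω → ℝ) : Prop :=
  ∀ h : E → ℝ, Measurable h → (∃ C, ∀ x, |h x| ≤ C) → ∫ ω, W ω * h (T ω) ∂P = 0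

lemma CondMeanZero.congr_ae (hW : CondMeanZero P T W) (hWV : W =ᵐ[P] V) : CondMeanZero P T V :=
  fun h hh hb => by
    rw [← hW h hh hb]
    exact integral_congr_ae (by filter_upwards [hWV] with ω hω; rw [hω])

/-- If `W ω * r (T ω)` is not integrable, both sides are `0` by the convention for the Bochner
integral; otherwise truncate `r`. -/
lemma CondMeanZero.integral_mul_comp (hW : CondMeanZero P T W) (hT : Measurable T) {r : E → ℝ}
    (hr : Measurable r) : ∫ ω, W ω * r (T ω) ∂P = 0 := by
  by_cases hi : Integrable (fun ω => W ω * r (T ω)) P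
  swap
  · exact integral_undef hi
  let B (n : ℕ) : Set E := {x | |r x| ≤ n}
  have hB (n : ℕ) : MeasurableSet (B n) := measurableSet_le hr.abs measurable_const
  have hB_mono : Monotone fun n => T ⁻¹' B n := fun m n hmn ω hω =>
    le_trans (show |r (T ω)| ≤ m from hω) (Nat.cast_le.2 hmn)
  have hB_univ : ⋃ n, T ⁻¹' B n = univ :=
    iUnion_eq_univ_iff.2 fun ω => exists_nat_ge |r (T ω)|
  have hB_zero (n : ℕ) : ∫ ω in T ⁻¹' B n, W ω * r (T ω) ∂P = 0 := by
    rw [← integral_indicator (hT (hB n)), ← hW ((B n).indicator r) (hr.indicator (hB n)) ⟨n, ?_⟩]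
    · refine integral_congr_ae (.of_forall fun ω => ?_)
      by_cases hω : T ω ∈ B n <;> simp [hω]
    · intro x
      by_cases hx : x ∈ B n
      · rw [indicator_of_mem hx]
        exact hx
      · simp [hx]
  have hlim := tendsto_setIntegral_of_monotone (fun n => hT (hB n)) hB_mono hi.integrableOn
  simp only [hB_zero, hB_univ, setIntegral_univ] at hlim
  exact tendsto_nhds_unique hlim tendsto_const_nhds

lemma CondMeanZero.integral_eq_zero (hW : CondMeanZero P T W) : ∫ ω, W ω ∂P = 0 := by
  simpa using hW (fun _ => 1) measurable_const ⟨1, by simp⟩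

lemma CondMeanZero.mul_comp (hW : CondMeanZero P T W) (hT : Measurable T) {r : E → ℝ}
    (hr : Measurable r) : CondMeanZero P T fun ω => W ω * r (T ω) := fun h hh _ => by
  simpa only [mul_assoc, Pi.mul_apply] using hW.integral_mul_comp hT (hr.mul hh)

lemma CondMeanZero.add (hV : CondMeanZero P T V) (hW : CondMeanZero P T W) (hT : Measurable T)
    (hVi : Integrable V P) (hWi : Integrable W P) : CondMeanZero P T fun ω => V ω + W ω := by
  rintro h hh ⟨C, hC⟩
  have hhT : AEStronglyMeasurable (fun ω => h (T ω)) P := (hh.comp hT).aestronglyMeasurable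
  have hbd : ∀ᵐ ω ∂P, ‖h (T ω)‖ ≤ C := .of_forall fun ω => hC (T ω)
  simp only [add_mul]
  rw [integral_add (hVi.mul_bdd hhT hbd) (hWi.mul_bdd hhT hbd), hV h hh ⟨C, hC⟩, hW h hh ⟨C, hC⟩,
    add_zero]

/-- The two terms may fail to be integrable: divide by `1 + |r| + |s|` before adding them. -/
lemma CondMeanZero.mul_comp_add_mul_comp (hV : CondMeanZero P T V) (hW : CondMeanZero P T W)
    (hT : Measurable T) (hVi : Integrable V P) (hWi : Integrable W P) {r s : E → ℝ}
    (hr : Measurable r) (hs : Measurable s) :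
    CondMeanZero P T fun ω => V ω * r (T ω) + W ω * s (T ω) := by
  let c (x : E) : ℝ := 1 + |r x| + |s x|
  have hc_pos (x : E) : 0 < c x := by positivity
  have hc : Measurable c := (measurable_const.add hr.abs).add hs.abs
  have hmul {Z : Ω → ℝ} (hZ : Integrable Z P) {t : E → ℝ} (ht : Measurable t)
      (htc : ∀ x, |t x| ≤ c x) : Integrable (fun ω => Z ω * (t (T ω) / c (T ω))) P := by
    refine hZ.mul_bdd (c := 1) ((ht.div hc).comp hT).aestronglyMeasurable (.of_forall fun ω => ?_)
    rw [Real.norm_eq_abs, abs_div, abs_of_pos (hc_pos _)]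
    exact div_le_one_of_le₀ (htc _) (hc_pos _).le
  have hscaled := (hV.mul_comp hT (hr.div hc)).add (hW.mul_comp hT (hs.div hc)) hT
    (hmul hVi hr fun x => by simp only [c]; linarith [abs_nonneg (s x)])
    (hmul hWi hs fun x => by simp only [c]; linarith [abs_nonneg (r x)])
  refine (hscaled.mul_comp hT hc).congr_ae (.of_forall fun ω => ?_)
  have := (hc_pos (T ω)).ne'
  simp only [Pi.div_apply]
  field_simp

lemma condMeanZero_mul_comp_of_forall_bounded (hU : Measurable U)
    (hW : ∀ f : F → ℝ, Measurable f → (∃ C, ∀ y, |f y| ≤ C) →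
      CondMeanZero P T fun ω => W ω * f (U ω))
    {f : F → ℝ} (hf : Measurable f) : CondMeanZero P T fun ω => W ω * f (U ω) := by
  intro h hh hb
  have hWh : CondMeanZero P U fun ω => W ω * h (T ω) := fun g hg hgb => by
    simpa only [mul_right_comm] using hW g hg hgb h hh hb
  simpa only [mul_right_comm] using hWh.integral_mul_comp hU hf

end CondMeanZero

lemma ind_mul (A : Set Ω) (f : Ω → ℝ) (ω : Ω) : ind A ω * f ω = A.indicator f ω := by
  by_cases h : ω ∈ A <;> simp [ind, h]

section IsCondMeanGiven

variable [MeasurableSpace Ω] [MeasurableSpace 𝓧] {P : Measure Ω} {X : Ω → 𝓧} {A : Set Ω}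
  {Z Z' : Ω → ℝ} {g g' : 𝓧 → ℝ}

lemma integrable_ind_mul (hA : MeasurableSet A) (hZ : Integrable Z P) :
    Integrable (fun ω => ind A ω * Z ω) P := by
  simpa only [ind_mul] using hZ.indicator hA

lemma integral_ind_mul (hA : MeasurableSet A) (Z : Ω → ℝ) :
    ∫ ω, ind A ω * Z ω ∂P = ∫ ω in A, Z ω ∂P := by
  simpa only [ind_mul] using integral_indicator hA

lemma isCondMeanGiven_iff_setIntegral (hA : MeasurableSet A) :
    IsCondMeanGiven P X A Z g ↔ Measurable g ∧
      ∀ h : 𝓧 → ℝ, Measurable h → (∃ C, ∀ x, |h x| ≤ C) →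
        ∫ ω in A, Z ω * h (X ω) ∂P = ∫ ω in A, g (X ω) * h (X ω) ∂P := by
  simp only [IsCondMeanGiven, mul_assoc, integral_ind_mul hA]

lemma IsCondMeanGiven.setIntegral_eq (hg : IsCondMeanGiven P X A Z g) (hA : MeasurableSet A) :
    ∫ ω in A, Z ω ∂P = ∫ ω in A, g (X ω) ∂P := by
  simpa using ((isCondMeanGiven_iff_setIntegral hA).1 hg).2 (fun _ => 1) measurable_const
    ⟨1, by simp⟩

lemma IsCondMeanGiven.congr_ae (hg : IsCondMeanGiven P X A Z g) (hA : MeasurableSet A)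
    (hZ : Z =ᵐ[P.restrict A] Z') (hg' : Measurable g')
    (hgg' : ∀ᵐ ω ∂P.restrict A, g (X ω) = g' (X ω)) : IsCondMeanGiven P X A Z' g' := by
  rw [isCondMeanGiven_iff_setIntegral hA] at hg ⊢
  refine ⟨hg', fun h hh hb => ?_⟩
  calc ∫ ω in A, Z' ω * h (X ω) ∂P
      = ∫ ω in A, Z ω * h (X ω) ∂P :=
        integral_congr_ae (by filter_upwards [hZ] with ω hω; rw [hω])
    _ = ∫ ω in A, g (X ω) * h (X ω) ∂P := hg.2 h hh hb
    _ = ∫ ω in A, g' (X ω) * h (X ω) ∂P :=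
        integral_congr_ae (by filter_upwards [hgg'] with ω hω; rw [hω])

lemma IsCondMeanGiven.inter_preimage (hg : IsCondMeanGiven P X A Z g) {B : Set 𝓧}
    (hB : MeasurableSet B) : IsCondMeanGiven P X (A ∩ X ⁻¹' B) Z g := by
  refine ⟨hg.1, fun h hh ⟨C, hC⟩ => ?_⟩
  have hmove (f : Ω → ℝ) (ω : Ω) :
      ind (A ∩ X ⁻¹' B) ω * f ω * h (X ω) = ind A ω * f ω * B.indicator h (X ω) := by
    by_cases hω : X ω ∈ B <;> simp [ind, indicator, hω]
  simp only [hmove Z, hmove fun ω => g (X ω)]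
  refine hg.2 _ (hh.indicator hB) ⟨C, fun x => ?_⟩
  exact (norm_indicator_le_norm_self h x).trans (hC x)

lemma abs_mul_sub_div_le_two {k a b : ℝ} (hk : k ^ 2 ≤ 1 + a ^ 2 + b ^ 2) :
    |k * ((a - b) / (1 + a ^ 2 + b ^ 2))| ≤ 2 := by
  have hc : 0 < 1 + a ^ 2 + b ^ 2 := by positivity
  rw [← mul_div_assoc, abs_div, abs_of_pos hc, div_le_iff₀ hc, abs_le]
  constructor <;>
    nlinarith [sq_nonneg (k + (a - b)), sq_nonneg (k - (a - b)), sq_nonneg (a + b)]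

/-- The test function `(g - g') / (1 + g² + g'²)` is chosen so that its products with `g` and `g'`
are bounded. -/
lemma IsCondMeanGiven.ae_eq [IsFiniteMeasure P] (hg : IsCondMeanGiven P X A Z g)
    (hg' : IsCondMeanGiven P X A Z g') (hX : Measurable X) (hA : MeasurableSet A) :
    ∀ᵐ ω ∂P.restrict A, g (X ω) = g' (X ω) := by
  rw [isCondMeanGiven_iff_setIntegral hA] at hg hg'
  have hgm := hg.1
  have hgm' := hg'.1
  let c (x : 𝓧) : ℝ := 1 + g x ^ 2 + g' x ^ 2
  have hc_pos (x : 𝓧) : 0 < c x := by positivity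
  let h (x : 𝓧) : ℝ := (g x - g' x) / c x
  have hh : Measurable h := by fun_prop
  have hh_bd (x : 𝓧) : |h x| ≤ 2 := by
    simpa using abs_mul_sub_div_le_two (k := 1) (a := g x) (b := g' x) (by nlinarith)
  have hint {k : 𝓧 → ℝ} (hk : Measurable k) (hkc : ∀ x, k x ^ 2 ≤ c x) :
      Integrable (fun ω => k (X ω) * h (X ω)) (P.restrict A) :=
    .of_bound ((hk.mul hh).comp hX).aestronglyMeasurable 2
      (.of_forall fun ω => abs_mul_sub_div_le_two (hkc (X ω)))
  have hgh := hint hgm fun x => by simp only [c]; nlinarith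
  have hgh' := hint hgm' fun x => by simp only [c]; nlinarith
  have hsq (ω : Ω) : g (X ω) * h (X ω) - g' (X ω) * h (X ω)
      = (g (X ω) - g' (X ω)) ^ 2 / c (X ω) := by
    simp only [h]; ring
  have hzero : ∫ ω in A, (g (X ω) - g' (X ω)) ^ 2 / c (X ω) ∂P = 0 := by
    simp only [← hsq]
    rw [integral_sub hgh hgh', ← hg.2 h hh ⟨2, hh_bd⟩, ← hg'.2 h hh ⟨2, hh_bd⟩, sub_self]
  have hae := (integral_eq_zero_iff_of_nonneg
    (fun ω => div_nonneg (sq_nonneg (g (X ω) - g' (X ω))) (hc_pos (X ω)).le)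
    ((hgh.sub hgh').congr (.of_forall hsq))).1 hzero
  filter_upwards [hae] with ω hω
  simpa [(hc_pos (X ω)).ne', sub_eq_zero] using hω

lemma ae_mem_of_condProb_pos [IsFiniteMeasure P] (hX : Measurable X) (hA : MeasurableSet A)
    {p : 𝓧 → ℝ} (hp : IsCondMeanGiven P X univ (ind A) p) (hp_pos : ∀ᵐ ω ∂P, 0 < p (X ω))
    {C : Set 𝓧} (hC : MeasurableSet C) (hAC : ∀ᵐ ω ∂P.restrict A, X ω ∈ C) :
    ∀ᵐ ω ∂P, X ω ∈ C := by
  have hXC : MeasurableSet (X ⁻¹' Cᶜ) := hX hC.compl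
  have hpC : IsCondMeanGiven P X (X ⁻¹' Cᶜ) (ind A) p := by
    simpa only [univ_inter] using hp.inter_preimage hC.compl
  have h0C : IsCondMeanGiven P X (X ⁻¹' Cᶜ) (ind A) fun _ => 0 := by
    refine ⟨measurable_const, fun h _ _ => ?_⟩
    simp only [mul_zero, zero_mul, integral_zero]
    refine integral_eq_zero_of_ae ?_
    filter_upwards [(ae_restrict_iff' hA).1 hAC] with ω hω
    by_cases hωA : ω ∈ A <;> simp [ind, hωA, hω]
  filter_upwards [(ae_restrict_iff' hXC).1 (hpC.ae_eq h0C hX hXC), hp_pos] with ω hω hpos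
  by_contra hωC
  exact hpos.ne' (hω hωC)

lemma IsCondMeanGiven.condMeanZero_residual (hg : IsCondMeanGiven P X A Z g) (hX : Measurable X)
    (hA : MeasurableSet A) (hZ : Integrable Z P) (hgi : Integrable (fun ω => g (X ω)) P) :
    CondMeanZero P X fun ω => ind A ω * (Z ω - g (X ω)) := by
  rintro h hh ⟨C, hC⟩
  have hmul {f : Ω → ℝ} (hf : Integrable f P) : Integrable (fun ω => ind A ω * f ω * h (X ω)) P :=
    (integrable_ind_mul hA hf).mul_bdd (hh.comp hX).aestronglyMeasurable
      (.of_forall fun ω => hC (X ω))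
  simp only [mul_sub, sub_mul]
  rw [integral_sub (hmul hZ) (hmul hgi), hg.2 h hh ⟨C, hC⟩, sub_self]

end IsCondMeanGiven

lemma threePaths_subset_allPaths : threePaths ⊆ allPaths := by
  rintro d (rfl | rfl | rfl) <;> simp [allPaths]

lemma snd_mem_of_mem_threePaths {d : ℝ × ℝ} (hd : d ∈ threePaths) : d.2 ∈ ({0, 1} : Set ℝ) := by
  rcases hd with rfl | rfl | rfl <;> simp

lemma measurableSet_evD2 [MeasurableSpace Ω] {D2 : Ω → ℝ} (hD2 : Measurable D2) (b : ℝ) :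
    MeasurableSet (evD2 D2 b) :=
  hD2 (measurableSet_singleton b)

lemma measurableSet_evD [MeasurableSpace Ω] {D1 D2 : Ω → ℝ} (hD1 : Measurable D1)
    (hD2 : Measurable D2) (e : ℝ × ℝ) : MeasurableSet (evD D1 D2 e) :=
  (hD1 (measurableSet_singleton e.1)).inter (hD2 (measurableSet_singleton e.2))

lemma ind_evD (D1 D2 : Ω → ℝ) (e : ℝ × ℝ) (ω : Ω) :
    ind (evD D1 D2 e) ω = ind (evD2 D2 e.2) ω * ({e.1} : Set ℝ).indicator 1 (D1 ω) := by
  by_cases h1 : D1 ω = e.1 <;> by_cases h2 : D2 ω = e.2 <;> simp [ind, evD, evD2, indicator, h1, h2]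

section MAR

variable [MeasurableSpace Ω] [MeasurableSpace 𝓧] {P : Measure Ω}
  {X : Ω → 𝓧} {D1 D2 S Y0 Y2 : Ω → ℝ} {q : ℝ → 𝓧 → ℝ} {φ m : 𝓧 → ℝ}

lemma MAR.ae_norm_sub_le_two {d2 : ℝ} (hMAR : MAR P X D1 D2 S Y0 Y2 q)
    (hd2 : d2 ∈ ({0, 1} : Set ℝ)) (hS_le : ∀ ω, |S ω| ≤ 1)
    (hφ : ∀ᵐ ω ∂P, φ (X ω) = q d2 (X ω)) : ∀ᵐ ω ∂P, ‖S ω - φ (X ω)‖ ≤ 2 := by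
  filter_upwards [hφ, hMAR.2.1 d2 hd2] with ω hω hq
  rw [Real.norm_eq_abs, hω]
  linarith [abs_sub (S ω) (q d2 (X ω)), abs_of_pos hq.1, hS_le ω]

variable [IsFiniteMeasure P]

lemma MAR.condMeanZero_evD2 {d2 : ℝ} (hMAR : MAR P X D1 D2 S Y0 Y2 q)
    (hd2 : d2 ∈ ({0, 1} : Set ℝ)) (hX : Measurable X) (hD1 : Measurable D1) (hD2 : Measurable D2)
    (hS : Measurable S) (hΔ : Measurable fun ω => Y2 ω - Y0 ω) (hS_le : ∀ ω, |S ω| ≤ 1)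
    (hφm : Measurable φ) (hφ : ∀ᵐ ω ∂P, φ (X ω) = q d2 (X ω)) {f : ℝ × ℝ → ℝ} (hf : Measurable f) :
    CondMeanZero P X fun ω =>
      ind (evD2 D2 d2) ω * (S ω - φ (X ω)) * f (D1 ω, Y2 ω - Y0 ω) := by
  have hDΔ : Measurable fun ω => (D1 ω, Y2 ω - Y0 ω) := hD1.prodMk hΔ
  refine condMeanZero_mul_comp_of_forall_bounded hDΔ ?_ hf
  rintro f hf ⟨C, hC⟩ h hh ⟨C', hC'⟩
  have hφ_le : ∀ᵐ ω ∂P, ‖φ (X ω)‖ ≤ 1 := by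
    filter_upwards [hφ, hMAR.2.1 d2 hd2] with ω hω hq
    rw [Real.norm_eq_abs, hω, abs_of_pos hq.1]
    exact hq.2
  have hint {Z : Ω → ℝ} (hZ : Measurable Z) (hZ_le : ∀ᵐ ω ∂P, ‖Z ω‖ ≤ 1) :
      Integrable (fun ω => ind (evD2 D2 d2) ω * Z ω * f (D1 ω, Y2 ω - Y0 ω) * h (X ω)) P :=
    ((integrable_ind_mul (measurableSet_evD2 hD2 d2)
      (.of_bound hZ.aestronglyMeasurable 1 hZ_le)).mul_bdd (hf.comp hDΔ).aestronglyMeasurable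
      (.of_forall fun ω => hC _)).mul_bdd (hh.comp hX).aestronglyMeasurable
      (.of_forall fun ω => hC' _)
  have hSφ : ∫ ω, ind (evD2 D2 d2) ω * S ω * f (D1 ω, Y2 ω - Y0 ω) * h (X ω) ∂P
      = ∫ ω, ind (evD2 D2 d2) ω * φ (X ω) * f (D1 ω, Y2 ω - Y0 ω) * h (X ω) ∂P := by
    rw [hMAR.2.2 d2 hd2 f hf ⟨C, hC⟩ h hh ⟨C', hC'⟩]
    exact integral_congr_ae (by filter_upwards [hφ] with ω hω; rw [hω])
  simp only [mul_sub, sub_mul]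
  rw [integral_sub (hint hS (.of_forall hS_le))
    (hint (Z := fun ω => φ (X ω)) (hφm.comp hX) hφ_le), hSφ, sub_self]

lemma MAR.condMeanZero_evD {e : ℝ × ℝ} (hMAR : MAR P X D1 D2 S Y0 Y2 q)
    (he : e.2 ∈ ({0, 1} : Set ℝ)) (hX : Measurable X) (hD1 : Measurable D1) (hD2 : Measurable D2)
    (hS : Measurable S) (hΔ : Measurable fun ω => Y2 ω - Y0 ω) (hS_le : ∀ ω, |S ω| ≤ 1)
    (hφm : Measurable φ) (hφ : ∀ᵐ ω ∂P, φ (X ω) = q e.2 (X ω)) {f : ℝ → ℝ} (hf : Measurable f) :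
    CondMeanZero P X fun ω =>
      ind (evD D1 D2 e) ω * (S ω - φ (X ω)) * f (Y2 ω - Y0 ω) := by
  have hK : Measurable fun p : ℝ × ℝ => ({e.1} : Set ℝ).indicator 1 p.1 * f p.2 :=
    ((measurable_one.indicator (measurableSet_singleton e.1)).comp measurable_fst).mul
      (hf.comp measurable_snd)
  refine (hMAR.condMeanZero_evD2 he hX hD1 hD2 hS hΔ hS_le hφm hφ hK).congr_ae
    (.of_forall fun ω => ?_)
  simp only [ind_evD]
  ring

lemma MAR.condMeanZero_residual {e : ℝ × ℝ} (hMAR : MAR P X D1 D2 S Y0 Y2 q)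
    (he : e.2 ∈ ({0, 1} : Set ℝ)) (hX : Measurable X) (hD1 : Measurable D1) (hD2 : Measurable D2)
    (hS : Measurable S) (hΔ : Measurable fun ω => Y2 ω - Y0 ω)
    (hΔi : Integrable (fun ω => Y2 ω - Y0 ω) P) (hS_le : ∀ ω, |S ω| ≤ 1)
    (hφm : Measurable φ) (hφ : ∀ᵐ ω ∂P, φ (X ω) = q e.2 (X ω)) (hm : Measurable m) :
    CondMeanZero P X fun ω =>
      (S ω - φ (X ω)) * (ind (evD D1 D2 e) ω * (Y2 ω - Y0 ω - m (X ω))) := by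
  have hA := measurableSet_evD hD1 hD2 e
  have hSφm : AEStronglyMeasurable (fun ω => S ω - φ (X ω)) P :=
    (hS.sub (hφm.comp hX)).aestronglyMeasurable
  have hint {f : Ω → ℝ} (hf : Integrable f P) :
      Integrable (fun ω => ind (evD D1 D2 e) ω * (S ω - φ (X ω)) * f ω) P := by
    simpa only [mul_assoc] using integrable_ind_mul hA
      (hf.bdd_mul hSφm (hMAR.ae_norm_sub_le_two he hS_le hφ))
  have hΔ_zero := hMAR.condMeanZero_evD he hX hD1 hD2 hS hΔ hS_le hφm hφ measurable_id
  have h1_zero := hMAR.condMeanZero_evD he hX hD1 hD2 hS hΔ hS_le hφm hφ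
    (measurable_const (a := (1 : ℝ)))
  refine (hΔ_zero.mul_comp_add_mul_comp h1_zero hX (hint hΔi) (hint (integrable_const 1))
    (measurable_const (a := (1 : ℝ))) hm.neg).congr_ae (.of_forall fun ω => ?_)
  simp only [id_eq, Pi.neg_apply]
  ring

lemma MAR.condMeanZero_observed_residual {e : ℝ × ℝ} (hMAR : MAR P X D1 D2 S Y0 Y2 q)
    (he : e.2 ∈ ({0, 1} : Set ℝ)) (hX : Measurable X) (hD1 : Measurable D1) (hD2 : Measurable D2)
    (hS : Measurable S) (hΔ : Measurable fun ω => Y2 ω - Y0 ω)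
    (hΔi : Integrable (fun ω => Y2 ω - Y0 ω) P) (hS_le : ∀ ω, |S ω| ≤ 1)
    (hφm : Measurable φ) (hφ : ∀ᵐ ω ∂P, φ (X ω) = q e.2 (X ω))
    (hm : IsCondMeanGiven P X (evD D1 D2 e) (fun ω => Y2 ω - Y0 ω) m)
    (hmi : Integrable (fun ω => m (X ω)) P) :
    CondMeanZero P X fun ω => S ω * (ind (evD D1 D2 e) ω * (Y2 ω - Y0 ω - m (X ω))) := by
  have hA := measurableSet_evD hD1 hD2 e
  have hRi := integrable_ind_mul hA (hΔi.sub hmi)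
  have hSRi := hRi.bdd_mul (hS.sub (hφm.comp hX)).aestronglyMeasurable
    (hMAR.ae_norm_sub_le_two he hS_le hφ)
  refine ((hMAR.condMeanZero_residual he hX hD1 hD2 hS hΔ hΔi hS_le hφm hφ
    hm.1).mul_comp_add_mul_comp (hm.condMeanZero_residual hX hA hΔi hmi) hX hSRi hRi
    (measurable_const (a := (1 : ℝ))) hφm).congr_ae (.of_forall fun ω => ?_)
  ring

end MAR

section HajekWeights

variable [MeasurableSpace Ω] [MeasurableSpace 𝓧] {P : Measure Ω}
  {X : Ω → 𝓧} {D1 D2 S Y0 Y2 : Ω → ℝ} {q : ℝ → 𝓧 → ℝ} {d : ℝ × ℝ}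
  {μd μd' πc πc' π2 π0 φ2 φ0 : 𝓧 → ℝ}

/-- The robust estimand involves no junk value: no quotient in its definition has a vanishing
denominator and all its expectations are finite. -/
structure IsWellDefinedTauR (P : Measure Ω) (X : Ω → 𝓧) (D1 D2 S Y0 Y2 : Ω → ℝ) (d : ℝ × ℝ)
    (μd μd' πc πc' π2 π0 φ2 φ0 : 𝓧 → ℝ) : Prop where
  φ2_ne_zero : ∀ x, φ2 x ≠ 0
  φ0_ne_zero : ∀ x, φ0 x ≠ 0
  πc'_ne_zero : ∀ x, πc' x ≠ 0
  π0_ne_zero : ∀ x, π0 x ≠ 0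
  integrable_n1 : Integrable (n1 X D1 D2 S φ2 d) P
  integrable_n2 : Integrable (n2 X D1 D2 S φ0 πc πc' π2 π0) P
  integrable_n3 : Integrable (n3 X D2 πc d.2) P
  integrable_n4 : Integrable (n4 X D2 S φ2 πc d.2) P
  integral_n1_ne_zero : ∫ ω, n1 X D1 D2 S φ2 d ω ∂P ≠ 0
  integral_n2_ne_zero : ∫ ω, n2 X D1 D2 S φ0 πc πc' π2 π0 ω ∂P ≠ 0
  integral_n3_ne_zero : ∫ ω, n3 X D2 πc d.2 ω ∂P ≠ 0
  integral_n4_ne_zero : ∫ ω, n4 X D2 S φ2 πc d.2 ω ∂P ≠ 0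
  integrable_residual_term : Integrable (fun ω =>
      (n1 X D1 D2 S φ2 d ω / ∫ ω', n1 X D1 D2 S φ2 d ω' ∂P
        - n2 X D1 D2 S φ0 πc πc' π2 π0 ω / ∫ ω', n2 X D1 D2 S φ0 πc πc' π2 π0 ω' ∂P)
      * (Y2 ω - Y0 ω - μd' (X ω))) P
  integrable_outcome_term : Integrable (fun ω =>
      (n3 X D2 πc d.2 ω / ∫ ω', n3 X D2 πc d.2 ω' ∂P
        - n4 X D2 S φ2 πc d.2 ω / ∫ ω', n4 X D2 S φ2 πc d.2 ω' ∂P)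
      * (μd (X ω) - μd' (X ω))) P

lemma CondMeanZero.integral_n3_sub_n4_term {d2 : ℝ}
    (h : CondMeanZero P X fun ω => n3 X D2 πc d2 ω - n4 X D2 S φ2 πc d2 ω) (hX : Measurable X)
    (hn3 : Integrable (n3 X D2 πc d2) P) (hn4 : Integrable (n4 X D2 S φ2 πc d2) P)
    {k : 𝓧 → ℝ} (hk : Measurable k) :
    ∫ ω, (n3 X D2 πc d2 ω / ∫ ω', n3 X D2 πc d2 ω' ∂P
        - n4 X D2 S φ2 πc d2 ω / ∫ ω', n4 X D2 S φ2 πc d2 ω' ∂P) * k (X ω) ∂P = 0 := by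
  have hN : ∫ ω, n3 X D2 πc d2 ω ∂P = ∫ ω, n4 X D2 S φ2 πc d2 ω ∂P := by
    rw [← sub_eq_zero, ← integral_sub hn3 hn4]
    exact h.integral_eq_zero
  rw [hN, ← h.integral_mul_comp hX (hk.div_const (∫ ω, n4 X D2 S φ2 πc d2 ω ∂P))]
  congr 1 with ω
  ring

variable [IsFiniteMeasure P]

lemma MAR.integral_n1 (hMAR : MAR P X D1 D2 S Y0 Y2 q) (hd : d.2 ∈ ({0, 1} : Set ℝ))
    (hX : Measurable X) (hD1 : Measurable D1) (hD2 : Measurable D2) (hS : Measurable S)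
    (hΔ : Measurable fun ω => Y2 ω - Y0 ω) (hS_le : ∀ ω, |S ω| ≤ 1) (hφm : Measurable φ2)
    (hφ : ∀ᵐ ω ∂P, φ2 (X ω) = q d.2 (X ω)) (hφ_ne : ∀ x, φ2 x ≠ 0)
    (hn1 : Integrable (n1 X D1 D2 S φ2 d) P) :
    ∫ ω, n1 X D1 D2 S φ2 d ω ∂P = P.real (evD D1 D2 d) := by
  have hA := measurableSet_evD hD1 hD2 d
  have hindi : Integrable (ind (evD D1 D2 d)) P := (integrable_const 1).indicator hA
  have hzero := (hMAR.condMeanZero_evD hd hX hD1 hD2 hS hΔ hS_le hφm hφ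
    (measurable_const (a := (1 : ℝ)))).integral_mul_comp hX hφm.inv
  have hdiff (ω : Ω) : ind (evD D1 D2 d) ω * (S ω - φ2 (X ω)) * 1 * (φ2 (X ω))⁻¹
      = n1 X D1 D2 S φ2 d ω - ind (evD D1 D2 d) ω := by
    have := hφ_ne (X ω)
    simp only [n1]
    field_simp
  simp only [Pi.inv_apply, hdiff] at hzero
  rw [integral_sub hn1 hindi, sub_eq_zero] at hzero
  rw [hzero]
  exact integral_indicator_one hA

lemma MAR.condMeanZero_n3_sub_n4 {d2 : ℝ} (hMAR : MAR P X D1 D2 S Y0 Y2 q)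
    (hd2 : d2 ∈ ({0, 1} : Set ℝ)) (hX : Measurable X) (hD1 : Measurable D1) (hD2 : Measurable D2)
    (hS : Measurable S) (hΔ : Measurable fun ω => Y2 ω - Y0 ω) (hS_le : ∀ ω, |S ω| ≤ 1)
    (hφm : Measurable φ2) (hφ : ∀ᵐ ω ∂P, φ2 (X ω) = q d2 (X ω)) (hφ_ne : ∀ x, φ2 x ≠ 0)
    (hπm : Measurable πc) :
    CondMeanZero P X fun ω => n3 X D2 πc d2 ω - n4 X D2 S φ2 πc d2 ω := by
  refine ((hMAR.condMeanZero_evD2 hd2 hX hD1 hD2 hS hΔ hS_le hφm hφ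
    (measurable_const (a := (1 : ℝ)))).mul_comp hX (hπm.neg.div hφm)).congr_ae
    (.of_forall fun ω => ?_)
  have := hφ_ne (X ω)
  simp only [n3, n4, Pi.div_apply, Pi.neg_apply]
  field_simp
  ring

lemma MAR.condMeanZero_residual_term (hMAR : MAR P X D1 D2 S Y0 Y2 q)
    (hd : d.2 ∈ ({0, 1} : Set ℝ)) (hX : Measurable X) (hD1 : Measurable D1) (hD2 : Measurable D2)
    (hS : Measurable S) (hΔ : Measurable fun ω => Y2 ω - Y0 ω)
    (hΔi : Integrable (fun ω => Y2 ω - Y0 ω) P) (hS_le : ∀ ω, |S ω| ≤ 1)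
    (hφ2m : Measurable φ2) (hφ2 : ∀ᵐ ω ∂P, φ2 (X ω) = q d.2 (X ω)) (hφ2_ne : ∀ x, φ2 x ≠ 0)
    (hφ0m : Measurable φ0) (hφ0 : ∀ᵐ ω ∂P, φ0 (X ω) = q 0 (X ω))
    (hμ : IsCondMeanGiven P X (evD D1 D2 (0, 0)) (fun ω => Y2 ω - Y0 ω) μd')
    (hμi : Integrable (fun ω => μd' (X ω)) P) (hπcm : Measurable πc) (hπc'm : Measurable πc')
    (hπ2m : Measurable π2) (hπ0m : Measurable π0) (N1 N2 : ℝ) :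
    CondMeanZero P X fun ω =>
      (n1 X D1 D2 S φ2 d ω / N1 - n2 X D1 D2 S φ0 πc πc' π2 π0 ω / N2)
          * (Y2 ω - Y0 ω - μd' (X ω))
        - ind (evD D1 D2 d) ω * (Y2 ω - Y0 ω - μd' (X ω)) / N1 := by
  have hRi (e : ℝ × ℝ) := integrable_ind_mul (measurableSet_evD hD1 hD2 e) (hΔi.sub hμi)
  have hd_zero := hMAR.condMeanZero_residual hd hX hD1 hD2 hS hΔ hΔi hS_le hφ2m hφ2 hμ.1
  have h0_zero := hMAR.condMeanZero_observed_residual (e := (0, 0)) (by simp) hX hD1 hD2 hS hΔ hΔi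
    hS_le hφ0m hφ0 hμ hμi
  have hd_int := (hRi d).bdd_mul (hS.sub (hφ2m.comp hX)).aestronglyMeasurable
    (hMAR.ae_norm_sub_le_two hd hS_le hφ2)
  have h0_int := (hRi (0, 0)).bdd_mul hS.aestronglyMeasurable (.of_forall hS_le)
  refine (hd_zero.mul_comp_add_mul_comp h0_zero hX hd_int h0_int (hφ2m.mul_const N1).inv
    (((hπcm.mul hπ2m).div (hπc'm.mul hπ0m)).div (hφ0m.mul_const (-N2)))).congr_ae
    (.of_forall fun ω => ?_)
  have := hφ2_ne (X ω)
  simp only [n1, n2, Pi.inv_apply, Pi.div_apply, Pi.mul_apply]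
  rw [mul_inv, mul_neg, div_neg]
  field_simp
  ring

end HajekWeights

lemma sub_eq_potential_sub_of_mem_evD {D1 D2 Y0 Y2 : Ω → ℝ} {Y0p Y2p : ℝ × ℝ → Ω → ℝ}
    (hcons0 : ∀ ω, Y0 ω = Y0p (D1 ω, D2 ω) ω) (hcons2 : ∀ ω, Y2 ω = Y2p (D1 ω, D2 ω) ω)
    {e : ℝ × ℝ} {ω : Ω} (hω : ω ∈ evD D1 D2 e) :
    Y2 ω - Y0 ω = Y2p e ω - Y0p e ω := by
  rw [hcons0, hcons2, show (D1 ω, D2 ω) = e from Prod.ext hω.1 hω.2]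

section DID

variable [MeasurableSpace Ω] [MeasurableSpace 𝓧] {P : Measure Ω}
  {X : Ω → 𝓧} {D1 D2 Y0 Y2 : Ω → ℝ} {Y0p Y2p : ℝ × ℝ → Ω → ℝ} {d : ℝ × ℝ} {p μ : 𝓧 → ℝ}

lemma DID.isCondMeanGiven_untreated_trend [IsFiniteMeasure P]
    (hd : DID P X D1 D2 Y0p Y2p d) (h0 : DID P X D1 D2 Y0p Y2p (0, 0)) (hX : Measurable X)
    (hD1 : Measurable D1) (hD2 : Measurable D2) (hcons0 : ∀ ω, Y0 ω = Y0p (D1 ω, D2 ω) ω)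
    (hcons2 : ∀ ω, Y2 ω = Y2p (D1 ω, D2 ω) ω)
    (hp : IsCondMeanGiven P X univ (ind (evD D1 D2 (0, 0))) p) (hp_pos : ∀ᵐ ω ∂P, 0 < p (X ω))
    (hμ : IsCondMeanGiven P X (evD D1 D2 (0, 0)) (fun ω => Y2 ω - Y0 ω) μ) :
    IsCondMeanGiven P X (evD D1 D2 d) (fun ω => Y2p (0, 0) ω - Y0p (0, 0) ω) μ := by
  obtain ⟨-, tr, htr, htr_d⟩ := hd
  obtain ⟨-, tr₀, htr₀, htr₀_0⟩ := h0
  have hA (e : ℝ × ℝ) := measurableSet_evD hD1 hD2 e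
  have htr_tr₀ : ∀ᵐ ω ∂P, tr (X ω) = tr₀ (X ω) := by
    simpa only [Measure.restrict_univ] using htr.ae_eq htr₀ hX .univ
  have hμ_trend := hμ.congr_ae (hA _) (ae_restrict_of_forall_mem (hA _) fun ω hω =>
    sub_eq_potential_sub_of_mem_evD hcons0 hcons2 hω) hμ.1 (.of_forall fun _ => rfl)
  have htr₀_μ : ∀ᵐ ω ∂P, tr₀ (X ω) = μ (X ω) :=
    ae_mem_of_condProb_pos hX (hA _) hp hp_pos (measurableSet_eq_fun htr₀.1 hμ.1)
      (htr₀_0.ae_eq hμ_trend hX (hA _))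
  refine htr_d.congr_ae (hA d) (.of_forall fun _ => rfl) hμ.1 (ae_restrict_of_ae ?_)
  filter_upwards [htr_tr₀, htr₀_μ] with ω h h'
  exact h.trans h'

lemma DID.setIntegral_residual (hd : DID P X D1 D2 Y0p Y2p d)
    (hD1 : Measurable D1) (hD2 : Measurable D2) (hcons0 : ∀ ω, Y0 ω = Y0p (D1 ω, D2 ω) ω)
    (hcons2 : ∀ ω, Y2 ω = Y2p (D1 ω, D2 ω) ω)
    (hY0d : Integrable (Y0p d) P) (hY00 : Integrable (Y0p (0, 0)) P)
    (hY2d : Integrable (Y2p d) P) (hY20 : Integrable (Y2p (0, 0)) P)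
    (hμ : IsCondMeanGiven P X (evD D1 D2 d) (fun ω => Y2p (0, 0) ω - Y0p (0, 0) ω) μ)
    (hμi : Integrable (fun ω => μ (X ω)) P) :
    ∫ ω in evD D1 D2 d, (Y2 ω - Y0 ω - μ (X ω)) ∂P
      = ∫ ω in evD D1 D2 d, (Y2p d ω - Y2p (0, 0) ω) ∂P := by
  have hA := measurableSet_evD hD1 hD2 d
  have hΔd : IntegrableOn (fun ω => Y2p d ω - Y0p d ω) (evD D1 D2 d) P :=
    (hY2d.sub hY0d).integrableOn
  have no_anticipation : ∫ ω in evD D1 D2 d, Y0p d ω ∂P = ∫ ω in evD D1 D2 d, Y0p (0, 0) ω ∂P := by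
    simpa only [mul_one, integral_ind_mul hA] using
      hd.1 (fun _ => 1) measurable_const ⟨1, by simp⟩
  calc ∫ ω in evD D1 D2 d, (Y2 ω - Y0 ω - μ (X ω)) ∂P
      = ∫ ω in evD D1 D2 d, (Y2p d ω - Y0p d ω - μ (X ω)) ∂P :=
        setIntegral_congr_fun hA fun ω hω => by
          simp only [sub_eq_potential_sub_of_mem_evD hcons0 hcons2 hω]
    _ = ∫ ω in evD D1 D2 d, Y2p d ω ∂P - ∫ ω in evD D1 D2 d, Y0p d ω ∂P
          - ∫ ω in evD D1 D2 d, (Y2p (0, 0) ω - Y0p (0, 0) ω) ∂P := by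
        rw [integral_sub hΔd hμi.integrableOn,
          integral_sub hY2d.integrableOn hY0d.integrableOn, hμ.setIntegral_eq hA]
    _ = ∫ ω in evD D1 D2 d, (Y2p d ω - Y2p (0, 0) ω) ∂P := by
        rw [integral_sub hY20.integrableOn hY00.integrableOn,
          integral_sub hY2d.integrableOn hY20.integrableOn, no_anticipation]
        ring

end DID

theorem statement_6_general [MeasurableSpace Ω] [MeasurableSpace 𝓧]
    (P : Measure Ω) [IsFiniteMeasure P] (X : Ω → 𝓧) (hX : Measurable X)
    (Y0 Y2 D1 D2 S : Ω → ℝ) (hΔ : Measurable fun ω => Y2 ω - Y0 ω)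
    (hΔi : Integrable (fun ω => Y2 ω - Y0 ω) P)
    (hD1 : Measurable D1) (hD2 : Measurable D2) (hS : Measurable S) (hS_le : ∀ ω, |S ω| ≤ 1)
    (Y0p Y2p : ℝ × ℝ → Ω → ℝ)
    (d : ℝ × ℝ) (hd : d.2 ∈ ({0, 1} : Set ℝ))
    (hY0d : Integrable (Y0p d) P) (hY00 : Integrable (Y0p (0, 0)) P)
    (hY2d : Integrable (Y2p d) P) (hY20 : Integrable (Y2p (0, 0)) P)
    (hcons0 : ∀ ω, Y0 ω = Y0p (D1 ω, D2 ω) ω) (hcons2 : ∀ ω, Y2 ω = Y2p (D1 ω, D2 ω) ω)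
    (hDIDd : DID P X D1 D2 Y0p Y2p d) (hDIDd' : DID P X D1 D2 Y0p Y2p (0, 0))
    (q : ℝ → 𝓧 → ℝ) (hMAR : MAR P X D1 D2 S Y0 Y2 q)
    (pd' : 𝓧 → ℝ) (hpd' : IsCondMeanGiven P X univ (ind (evD D1 D2 (0, 0))) pd')
    (hpd'pos : ∀ᵐ ω ∂P, 0 < pd' (X ω))
    (μd μd' πc πc' π2 π0 φ2 φ0 : 𝓧 → ℝ)
    (hμdm : Measurable μd) (hμd'i : Integrable (fun ω => μd' (X ω)) P)
    (hπcm : Measurable πc) (hπc'm : Measurable πc') (hπ2m : Measurable π2) (hπ0m : Measurable π0)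
    (hφ2m : Measurable φ2) (hφ0m : Measurable φ0)
    (hτ : IsWellDefinedTauR P X D1 D2 S Y0 Y2 d μd μd' πc πc' π2 π0 φ2 φ0)
    (hφ2 : ∀ᵐ ω ∂P, φ2 (X ω) = q d.2 (X ω)) (hφ0 : ∀ᵐ ω ∂P, φ0 (X ω) = q 0 (X ω))
    (hμd' : IsCondMeanGiven P X (evD D1 D2 (0, 0)) (fun ω => Y2 ω - Y0 ω) μd') :
    tauR P X D1 D2 S Y0 Y2 d μd μd' πc πc' π2 π0 φ2 φ0 = tau P D1 D2 Y2p d := by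
  have hA := measurableSet_evD hD1 hD2 d
  have hN1 := hMAR.integral_n1 hd hX hD1 hD2 hS hΔ hS_le hφ2m hφ2 hτ.φ2_ne_zero hτ.integrable_n1
  have hRi : Integrable (fun ω => ind (evD D1 D2 d) ω * (Y2 ω - Y0 ω - μd' (X ω))) P :=
    integrable_ind_mul hA (hΔi.sub hμd'i)
  have houtcome := (hMAR.condMeanZero_n3_sub_n4 hd hX hD1 hD2 hS hΔ hS_le hφ2m hφ2 hτ.φ2_ne_zero
    hπcm).integral_n3_sub_n4_term hX hτ.integrable_n3 hτ.integrable_n4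
    (k := fun x => μd x - μd' x) (hμdm.sub hμd'.1)
  have hresidual := (hMAR.condMeanZero_residual_term hd hX hD1 hD2 hS hΔ hΔi hS_le hφ2m hφ2
    hτ.φ2_ne_zero hφ0m hφ0 hμd' hμd'i hπcm hπc'm hπ2m hπ0m (∫ ω, n1 X D1 D2 S φ2 d ω ∂P)
    (∫ ω, n2 X D1 D2 S φ0 πc πc' π2 π0 ω ∂P)).integral_eq_zero
  have htrend := hDIDd.isCondMeanGiven_untreated_trend hDIDd' hX hD1 hD2 hcons0 hcons2 hpd' hpd'pos
    hμd'
  have hident := hDIDd.setIntegral_residual hD1 hD2 hcons0 hcons2 hY0d hY00 hY2d hY20 htrend hμd'i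
  rw [integral_sub hτ.integrable_residual_term (hRi.div_const _), sub_eq_zero, integral_div,
    integral_ind_mul hA, hident] at hresidual
  rw [tauR, hresidual, houtcome, add_zero, hN1, tau, Measure.real, div_eq_inv_mul]

/-- Theorem 1, case 3: the robust estimand identifies the PDATT when the missing-data
and outcome models are correctly specified (the propensity-score models are arbitrary). -/
theorem statement_6
    [MeasurableSpace Ω] [m𝓧 : MeasurableSpace 𝓧]
    (P : Measure Ω) [IsProbabilityMeasure P]
    (X : Ω → 𝓧) (hX : Measurable X)
    (Y0 Y2 D1 D2 S : Ω → ℝ)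
    (hY0 : Measurable Y0) (hY2 : Measurable Y2)
    (hD1 : Measurable D1) (hD2 : Measurable D2) (hS : Measurable S)
    (hY0i : Integrable Y0 P) (hY2i : Integrable Y2 P)
    (hD1v : ∀ ω, D1 ω = 0 ∨ D1 ω = 1) (hD2v : ∀ ω, D2 ω = 0 ∨ D2 ω = 1)
    (hSv : ∀ ω, S ω = 0 ∨ S ω = 1)
    (Y0p Y2p : ℝ × ℝ → Ω → ℝ)
    (hY0p : ∀ e ∈ allPaths, Measurable (Y0p e) ∧ Integrable (Y0p e) P)
    (hY2p : ∀ e ∈ allPaths, Measurable (Y2p e) ∧ Integrable (Y2p e) P)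
    (hcons0 : ∀ ω, Y0 ω = Y0p (D1 ω, D2 ω) ω)
    (hcons2 : ∀ ω, Y2 ω = Y2p (D1 ω, D2 ω) ω)
    (d : ℝ × ℝ) (hd : d ∈ threePaths)
    (hDIDd : DID P X D1 D2 Y0p Y2p d) (hDIDd' : DID P X D1 D2 Y0p Y2p (0, 0))
    (q : ℝ → 𝓧 → ℝ) (hMAR : MAR P X D1 D2 S Y0 Y2 q)
    (pd pd' : 𝓧 → ℝ)
    (hpd : IsCondMeanGiven P X Set.univ (ind (evD D1 D2 d)) pd)
    (hpd' : IsCondMeanGiven P X Set.univ (ind (evD D1 D2 (0, 0))) pd')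
    (hpdpos : ∀ᵐ ω ∂P, 0 < pd (X ω)) (hpd'pos : ∀ᵐ ω ∂P, 0 < pd' (X ω))
    (μd μd' πc πc' π2 π0 φ2 φ0 : 𝓧 → ℝ)
    (hμdm : Measurable μd) (hμd'm : Measurable μd')
    (hμdi : Integrable (fun ω => μd (X ω)) P) (hμd'i : Integrable (fun ω => μd' (X ω)) P)
    (hπcm : Measurable πc) (hπc'm : Measurable πc')
    (hπ2m : Measurable π2) (hπ0m : Measurable π0)
    (hπcv : ∀ x, 0 < πc x ∧ πc x < 1) (hπc'v : ∀ x, 0 < πc' x ∧ πc' x < 1)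
    (hπ2v : ∀ x, 0 < π2 x ∧ π2 x < 1) (hπ0v : ∀ x, 0 < π0 x ∧ π0 x < 1)
    (hφ2m : Measurable φ2) (hφ0m : Measurable φ0)
    (hφ2v : ∀ x, 0 < φ2 x ∧ φ2 x ≤ 1) (hφ0v : ∀ x, 0 < φ0 x ∧ φ0 x ≤ 1)
    (hn1i : Integrable (n1 X D1 D2 S φ2 d) P)
    (hn1pos : 0 < ∫ ω, n1 X D1 D2 S φ2 d ω ∂P)
    (hn2i : Integrable (n2 X D1 D2 S φ0 πc πc' π2 π0) P)
    (hn2pos : 0 < ∫ ω, n2 X D1 D2 S φ0 πc πc' π2 π0 ω ∂P)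
    (hn3i : Integrable (n3 X D2 πc d.2) P)
    (hn3pos : 0 < ∫ ω, n3 X D2 πc d.2 ω ∂P)
    (hn4i : Integrable (n4 X D2 S φ2 πc d.2) P)
    (hn4pos : 0 < ∫ ω, n4 X D2 S φ2 πc d.2 ω ∂P)
    (hint1 : Integrable (fun ω =>
        (n1 X D1 D2 S φ2 d ω / ∫ ω', n1 X D1 D2 S φ2 d ω' ∂P
          - n2 X D1 D2 S φ0 πc πc' π2 π0 ω / ∫ ω', n2 X D1 D2 S φ0 πc πc' π2 π0 ω' ∂P)
        * (Y2 ω - Y0 ω - μd' (X ω))) P)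
    (hint2 : Integrable (fun ω =>
        (n3 X D2 πc d.2 ω / ∫ ω', n3 X D2 πc d.2 ω' ∂P
          - n4 X D2 S φ2 πc d.2 ω / ∫ ω', n4 X D2 S φ2 πc d.2 ω' ∂P)
        * (μd (X ω) - μd' (X ω))) P)
    (hφ2_corr : ∀ᵐ ω ∂P, φ2 (X ω) = q d.2 (X ω))
    (hφ0_corr : ∀ᵐ ω ∂P, φ0 (X ω) = q 0 (X ω))
    (hμd_corr : IsCondMeanGiven P X (evD D1 D2 d) (fun ω => Y2 ω - Y0 ω) μd)
    (hμd'_corr : IsCondMeanGiven P X (evD D1 D2 (0, 0)) (fun ω => Y2 ω - Y0 ω) μd')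
    :
    tauR P X D1 D2 S Y0 Y2 d μd μd' πc πc' π2 π0 φ2 φ0 = tau P D1 D2 Y2p d := by
  have hd_mem := threePaths_subset_allPaths hd
  have h0_mem : ((0, 0) : ℝ × ℝ) ∈ allPaths := by simp [allPaths]
  exact statement_6_general P X hX Y0 Y2 D1 D2 S (hY2.sub hY0) (hY2i.sub hY0i) hD1 hD2 hS
    (fun ω => by rcases hSv ω with h | h <;> simp [h]) Y0p Y2p d (snd_mem_of_mem_threePaths hd)
    (hY0p d hd_mem).2 (hY0p _ h0_mem).2 (hY2p d hd_mem).2 (hY2p _ h0_mem).2 hcons0 hcons2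
    hDIDd hDIDd' q hMAR pd' hpd' hpd'pos μd μd' πc πc' π2 π0 φ2 φ0 hμdm hμd'i hπcm hπc'm hπ2m hπ0m
    hφ2m hφ0m
    ⟨fun x => (hφ2v x).1.ne', fun x => (hφ0v x).1.ne', fun x => (hπc'v x).1.ne',
      fun x => (hπ0v x).1.ne', hn1i, hn2i, hn3i, hn4i, hn1pos.ne', hn2pos.ne', hn3pos.ne',
      hn4pos.ne', hint1, hint2⟩ hφ2_corr hφ0_corr hμd'_corr

end DIDMissing
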